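/- Let G be a lacunary hyperbolic group, written as a direct limit of δ_k-hyperbolic marked groups (G_k,S_k) with inj(η_k)/δ_k → ∞. Consider a sequence of indices k_i → ∞ and, for each i, an isometric action of G_{k_i} on a 1-hyperbolic geodesic metric space X_i such that the minimal displacements λ(G_{k_i},X_i) tend to infinity. Then G admits an isometric action on an ℝ-tree without a global fixed point. -/

import Mathlib

/-! The tree is a rescaled ultralimit of the `X i`. Put `λ i = minDisp (G_{k i}, X i)`, choose base
points `x i` which the generators move by at most `λ i + 1`, divide the metric of `X i` by `λ i`
(more precisely by `max 1 (λ i)`), and let `T` be the limit along a nonprincipal ultrafilter on `ℕ`: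
sequences at bounded rescaled distance from the base points, modulo distance zero.

* Geodesics pass to the limit (`UltraLimit.geodesic`), and since the scales tend to `0` the
  hyperbolicity constant of the limit is `0` (`UltraLimit.hyperbolic`); so `T` is an ℝ-tree.
* The free group on the generators acts on each `X i` through `G_{k i}`. Generators move the base
  points by a bounded rescaled amount, hence so do all words (`bounded_displacement`), and there
  is a limit action on `T` (`UltraLimit.exists_action`). A relation of `G` already holds in
  all but finitely many `G_k` (`LHSeq.eventually_pk_eq_one`), so this action factors through `G`.
* If the class of a sequence `y` were fixed, then for almost all `i` every generator would move
  `y i` by at most half of `λ i`, against the definition of `λ i`.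
-/

open Filter Set Function

namespace LacHyp

/-! ### Word length and norms of endomorphisms for marked groups -/

/-- Word length of `g` in the group `H` marked by the epimorphism `p` from a free group:
the least length of a word in the (images of the) generators representing `g`. -/
noncomputable def wlen {ι : Type} [DecidableEq ι] {H : Type*} [Group H]
    (p : FreeGroup ι →* H) (g : H) : ℕ :=
  sInf {n | ∃ w : FreeGroup ι, p w = g ∧ w.norm = n}

/-- The norm `|φ| = max_{s ∈ S} |φ(s)|_S` of an endomorphism of a marked group. -/
noncomputable def enorm {ι : Type} [Fintype ι] [DecidableEq ι] {H : Type*} [Group H]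
    (p : FreeGroup ι →* H) (φ : H →* H) : ℕ :=
  Finset.univ.sup fun i : ι => wlen p (φ (p (FreeGroup.of i)))

/-- The conjugacy-invariant norm `‖φ‖ = inf_g |ι_g ∘ φ|` of an endomorphism. -/
noncomputable def cnorm {ι : Type} [Fintype ι] [DecidableEq ι] {H : Type*} [Group H]
    (p : FreeGroup ι →* H) (φ : H →* H) : ℕ :=
  sInf (Set.range fun g : H => enorm p ((MulAut.conj g).toMonoidHom.comp φ))

/-- The marked group `(H, S)` is `δ`-hyperbolic: Gromov's four-point condition for the
word metric `d(x, y) = |x⁻¹y|_S`. -/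
def MarkedHyperbolic {ι : Type} [DecidableEq ι] {H : Type*} [Group H]
    (p : FreeGroup ι →* H) (δ : ℝ) : Prop :=
  ∀ x y z w : H,
    (wlen p (x⁻¹ * y) : ℝ) + (wlen p (z⁻¹ * w) : ℝ) ≤
      max ((wlen p (x⁻¹ * z) : ℝ) + (wlen p (y⁻¹ * w) : ℝ))
        ((wlen p (x⁻¹ * w) : ℝ) + (wlen p (y⁻¹ * z) : ℝ)) + 2 * δ

/-- `η` is injective on every ball of radius `R` of the marked group `(H, S)`. -/
def InjOnBalls {ι : Type} [DecidableEq ι] {H G' : Type*} [Group H] [Group G']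
    (p : FreeGroup ι →* H) (η : H →* G') (R : ℕ) : Prop :=
  ∀ c x y : H, wlen p (c⁻¹ * x) ≤ R → wlen p (c⁻¹ * y) ≤ R → η x = η y → x = y

/-! ### Lacunary hyperbolic groups as limits of hyperbolic groups -/

/-- A presentation of the marked group `(G, S)` (with `S` indexed by `ι`, via the marking `m`)
as a direct limit of `δ_k`-hyperbolic marked groups `(G_k, S_k)` in which the natural
epimorphisms `η_k : G_k → G` are injective on balls of radius `R_k` with `R_k/δ_k → ∞`.
This is Ol'shanskii–Osin–Sapir's characterization of lacunary hyperbolicity. -/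
structure LHSeq (ι : Type) [Fintype ι] [DecidableEq ι] (G : Type*) [Group G]
    (m : FreeGroup ι →* G) where
  m_surj : Function.Surjective m
  /-- the approximating groups `G_k` -/
  Gk : ℕ → Type
  [grp : ∀ k, Group (Gk k)]
  /-- the markings `π_k` of the `G_k` (so `S_k` is the image of the generators) -/
  pk : ∀ k, FreeGroup ι →* Gk k
  /-- the natural epimorphisms `η_k : G_k → G` -/
  ηk : ∀ k, Gk k →* G
  pk_surj : ∀ k, Function.Surjective (pk k)
  /-- `G_{k+1}` is a marked quotient of `G_k` (this encodes the bonding epimorphisms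
  `α_k : (G_k, S_k) ↠ (G_{k+1}, S_{k+1})`) -/
  ker_mono : ∀ k, (pk k).ker ≤ (pk (k + 1)).ker
  ηk_comp : ∀ k, (ηk k).comp (pk k) = m
  /-- `G` is the direct limit of the `G_k` -/
  limit : ∀ w : FreeGroup ι, m w = 1 → ∃ k, pk k w = 1
  /-- the hyperbolicity constants -/
  δ : ℕ → ℝ
  δ_pos : ∀ k, 0 < δ k
  hyp : ∀ k, MarkedHyperbolic (pk k) (δ k)
  /-- radii of injectivity of the `η_k` -/
  R : ℕ → ℕ
  inj : ∀ k, InjOnBalls (pk k) (ηk k) (R k)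
  /-- the lacunarity condition `inj(η_k)/δ_k → ∞` -/
  lac : Filter.Tendsto (fun k => (R k : ℝ) / δ k) Filter.atTop Filter.atTop

attribute [instance] LHSeq.grp

/-- A finitely generated group is lacunary hyperbolic if it admits an approximating
sequence as above. -/
def LacunaryHyperbolic (G : Type*) [Group G] : Prop :=
  ∃ (ι : Type) (_ : Fintype ι) (_ : DecidableEq ι) (m : FreeGroup ι →* G),
    Nonempty (LHSeq ι G m)

section Lifts

variable {ι : Type} [Fintype ι] [DecidableEq ι] {G : Type*} [Group G] {m : FreeGroup ι →* G}

/-- The endomorphism `ψ` of the free group `G_0` descends to an endomorphism of `G_k`. -/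
def LiftsAt (D : LHSeq ι G m) (ψ : FreeGroup ι →* FreeGroup ι) (k : ℕ) : Prop :=
  ∃ φk : D.Gk k →* D.Gk k, φk.comp (D.pk k) = (D.pk k).comp ψ

/-- `φ` coherently lifts from step `n`: some lift `ψ` of `φ` to the free group `G_0`
induces endomorphisms of `G_k` for all `k ≥ n`. -/
def CoherentlyLifts (D : LHSeq ι G m) (φ : G →* G) (n : ℕ) : Prop :=
  ∃ ψ : FreeGroup ι →* FreeGroup ι, m.comp ψ = φ.comp m ∧ ∀ k, n ≤ k → LiftsAt D ψ k

end Lifts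

/-! ### ℝ-trees and property (FR) -/

/-- Gromov's four-point condition for a metric space. -/
def GromovHyperbolicSpace (X : Type*) [MetricSpace X] (δ : ℝ) : Prop :=
  ∀ x y z w : X, dist x y + dist z w ≤ max (dist x z + dist y w) (dist x w + dist y z) + 2 * δ

/-- A geodesic metric space. -/
def GeodesicSpace (X : Type*) [MetricSpace X] : Prop :=
  ∀ x y : X, ∃ f : ℝ → X, f 0 = x ∧ f (dist x y) = y ∧
    ∀ s ∈ Set.Icc (0 : ℝ) (dist x y), ∀ t ∈ Set.Icc (0 : ℝ) (dist x y),
      dist (f s) (f t) = |s - t|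

/-- An ℝ-tree: a geodesic, 0-hyperbolic metric space. -/
def IsRTree (X : Type*) [MetricSpace X] : Prop :=
  GeodesicSpace X ∧ GromovHyperbolicSpace X 0

/-- Property (FR): every isometric action on an ℝ-tree has a global fixed point. -/
def PropertyFR (G : Type*) [Group G] : Prop :=
  ∀ (X : Type) (_ : MetricSpace X), IsRTree X →
    ∀ ρ : G →* (X ≃ᵢ X), ∃ x : X, ∀ g : G, ρ g x = x

/-- Minimal displacement `λ(H, X) = inf_x max_{s ∈ S} d(s·x, x)` of an isometric action of
the marked group `(H, S)` on `X`. -/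
noncomputable def minDisp {ι : Type} [Fintype ι] {H : Type*} [Group H] {X : Type*}
    [MetricSpace X] (p : FreeGroup ι →* H) (ρ : H →* (X ≃ᵢ X)) : ℝ :=
  ⨅ x : X, ⨆ i : ι, dist (ρ (p (FreeGroup.of i)) x) x

/-! ### Outer automorphisms -/

/-- The subgroup of inner automorphisms. -/
def innerAut (G : Type*) [Group G] : Subgroup (MulAut G) :=
  (MulAut.conj : G →* MulAut G).range

instance innerAut_normal (G : Type*) [Group G] : (innerAut G).Normal := by
  constructor
  rintro x ⟨g, rfl⟩ σ
  refine ⟨σ g, ?_⟩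
  ext h
  simp [MulAut.conj, mul_assoc]

/-- The outer automorphism group `Out(G) = Aut(G)/Inn(G)`. -/
abbrev OutAut (G : Type*) [Group G] := MulAut G ⧸ innerAut G

/-- The norm `‖Φ‖` of an outer automorphism class. -/
noncomputable def outNorm {ι : Type} [Fintype ι] [DecidableEq ι] {G : Type*} [Group G]
    (m : FreeGroup ι →* G) (Φ : OutAut G) : ℕ :=
  sInf {n | ∃ φ : MulAut G, (QuotientGroup.mk φ : OutAut G) = Φ ∧ cnorm m φ.toMonoidHom = n}

/-- A group is locally finite if all its finitely generated subgroups are finite. -/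
def LocallyFiniteGroup (G : Type*) [Group G] : Prop :=
  ∀ H : Subgroup G, H.FG → Finite H

/-! ### Hyperbolic groups, elementary subgroups, `E_H(G)` -/

/-- A hyperbolic group: some marking by a finite generating set is `δ`-hyperbolic. -/
def HyperbolicGroup (H : Type*) [Group H] : Prop :=
  ∃ (ι : Type) (_ : Fintype ι) (_ : DecidableEq ι) (p : FreeGroup ι →* H) (δ : ℝ),
    Function.Surjective p ∧ 0 ≤ δ ∧ MarkedHyperbolic p δ

/-- A group is virtually cyclic (elementary) if it has a cyclic subgroup of finite index. -/
def VirtuallyCyclic (K : Type*) [Group K] : Prop :=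
  ∃ C : Subgroup K, IsCyclic C ∧ C.FiniteIndex

/-- `E_H(K)`: the set of elements of `H` whose orbit under conjugation by the subgroup `K`
is finite. -/
def EHset {H : Type*} [Group H] (K : Subgroup H) : Set H :=
  {h : H | (Set.range fun g : K => (g : H) * h * (g : H)⁻¹).Finite}

/-- Equationally Noetherian group: every system of equations (in `n` variables) has the same
solution set as a finite subsystem. -/
def EquationallyNoetherian (G : Type*) [Group G] : Prop :=
  ∀ (n : ℕ) (S : Set (FreeGroup (Fin n))), ∃ S₀ : Finset (FreeGroup (Fin n)),
    ↑S₀ ⊆ S ∧ ∀ x : Fin n → G,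
      (∀ w ∈ S₀, FreeGroup.lift x w = 1) → ∀ w ∈ S, FreeGroup.lift x w = 1


/-! ### Rescaled ultralimits of pointed metric spaces -/

/-- Bounded nonnegative real sequences converge along the hyperfilter. -/
theorem exists_tendsto_hyperfilter {u : ℕ → ℝ} {C : ℝ} (h0 : ∀ i, 0 ≤ u i) (hC : ∀ i, u i ≤ C) :
    ∃ l, Tendsto u (hyperfilter ℕ) (nhds l) := by
  obtain ⟨l, -, hl⟩ := (isCompact_Icc (a := (0 : ℝ)) (b := C)).ultrafilter_le_nhds
    ((hyperfilter ℕ).map u) (by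
      rw [le_principal_iff]
      exact Eventually.of_forall (f := (hyperfilter ℕ : Filter ℕ)) fun i => ⟨h0 i, hC i⟩)
  exact ⟨l, hl⟩

/-- The sequences `y` in `∏ X i` at bounded distance from the base points `x i`, where the
distance of `X i` is multiplied by the scale `c i`. -/
@[ext]
structure BddSeq {X : ℕ → Type} [∀ i, MetricSpace (X i)] (c : ℕ → NNReal)
    (x : ∀ i, X i) : Type where
  val : ∀ i, X i
  bdd : ∃ C : ℝ, ∀ i, (c i : ℝ) * dist (val i) (x i) ≤ C

section Ultralimit

variable {X : ℕ → Type} [∀ i, MetricSpace (X i)] {c : ℕ → NNReal} {x : ∀ i, X i}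

theorem BddSeq.exists_tendsto (y z : BddSeq c x) :
    ∃ l, Tendsto (fun i => (c i : ℝ) * dist (y.1 i) (z.1 i)) (hyperfilter ℕ) (nhds l) := by
  obtain ⟨C, hC⟩ := y.bdd
  obtain ⟨C', hC'⟩ := z.bdd
  refine exists_tendsto_hyperfilter (C := C + C') (fun i => by positivity) fun i => ?_
  calc (c i : ℝ) * dist (y.1 i) (z.1 i)
      ≤ c i * (dist (y.1 i) (x i) + dist (z.1 i) (x i)) := by
        gcongr; exact dist_triangle_right _ _ _
    _ = c i * dist (y.1 i) (x i) + c i * dist (z.1 i) (x i) := by ring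
    _ ≤ C + C' := add_le_add (hC i) (hC' i)

/-- The limit along the hyperfilter of the rescaled distances. -/
noncomputable instance BddSeq.instDist : Dist (BddSeq c x) where
  dist y z := limUnder (hyperfilter ℕ : Filter ℕ) fun i => (c i : ℝ) * dist (y.1 i) (z.1 i)

theorem BddSeq.tendsto_dist (y z : BddSeq c x) :
    Tendsto (fun i => (c i : ℝ) * dist (y.1 i) (z.1 i)) (hyperfilter ℕ) (nhds (dist y z)) :=
  tendsto_nhds_limUnder (BddSeq.exists_tendsto y z)

theorem BddSeq.dist_eq_of_tendsto {y z : BddSeq c x} {l : ℝ}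
    (h : Tendsto (fun i => (c i : ℝ) * dist (y.1 i) (z.1 i)) (hyperfilter ℕ) (nhds l)) :
    dist y z = l :=
  tendsto_nhds_unique (BddSeq.tendsto_dist y z) h

noncomputable instance BddSeq.instPseudoMetricSpace : PseudoMetricSpace (BddSeq c x) where
  dist_self y := BddSeq.dist_eq_of_tendsto (by simp)
  dist_comm y z := BddSeq.dist_eq_of_tendsto (by
    simpa only [dist_comm] using BddSeq.tendsto_dist z y)
  dist_triangle y z w := by
    refine le_of_tendsto_of_tendsto' (BddSeq.tendsto_dist y w)
      ((BddSeq.tendsto_dist y z).add (BddSeq.tendsto_dist z w)) fun i => ?_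
    rw [← mul_add]
    gcongr
    exact dist_triangle _ _ _

/-- The rescaled ultralimit of the pointed spaces `(X i, x i)` with scales `c i`. -/
abbrev UltraLimit {X : ℕ → Type} [∀ i, MetricSpace (X i)] (c : ℕ → NNReal) (x : ∀ i, X i) : Type :=
  SeparationQuotient (BddSeq c x)

/-- When the scales tend to `0`, the defect of the four-point condition disappears. -/
theorem UltraLimit.hyperbolic (hc : Tendsto (fun i => (c i : ℝ)) (hyperfilter ℕ) (nhds 0))
    {δ : ℝ} (h : ∀ i, GromovHyperbolicSpace (X i) δ) :
    GromovHyperbolicSpace (UltraLimit c x) 0 := by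
  intro a b p q
  obtain ⟨a, rfl⟩ := SeparationQuotient.surjective_mk a
  obtain ⟨b, rfl⟩ := SeparationQuotient.surjective_mk b
  obtain ⟨p, rfl⟩ := SeparationQuotient.surjective_mk p
  obtain ⟨q, rfl⟩ := SeparationQuotient.surjective_mk q
  simp only [SeparationQuotient.dist_mk]
  have T := fun y z : BddSeq c x => BddSeq.tendsto_dist y z
  have hc' : Tendsto (fun i => (c i : ℝ) * (2 * δ)) (hyperfilter ℕ) (nhds (2 * 0)) := by
    simpa using hc.mul_const (2 * δ)
  refine le_of_tendsto_of_tendsto' ((T a b).add (T p q))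
    ((((T a p).add (T b q)).max ((T a q).add (T b p))).add hc') fun i => ?_
  rw [← mul_add, ← mul_add, ← mul_add, ← mul_max_of_nonneg _ _ (c i).coe_nonneg, ← mul_add]
  exact mul_le_mul_of_nonneg_left (h i _ _ _ _) (c i).coe_nonneg

/-- A geodesic of the ultralimit is a limit of geodesics `f i` of the `X i`, reparametrized
by `t ↦ t / c i` and stopped at the end point. -/
theorem UltraLimit.geodesic (hc : ∀ i, 0 < c i) (h : ∀ i, GeodesicSpace (X i)) :
    GeodesicSpace (UltraLimit c x) := by
  intro a b
  obtain ⟨y, rfl⟩ := SeparationQuotient.surjective_mk a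
  obtain ⟨z, rfl⟩ := SeparationQuotient.surjective_mk b
  choose f hf0 hf1 hf using fun i => h i (y.1 i) (z.1 i)
  have hcr : ∀ i, (0 : ℝ) < c i := hc
  -- the parameter at which `f i` is evaluated
  let τ : ℕ → ℝ → ℝ := fun i t => max 0 (min (t / c i) (dist (y.1 i) (z.1 i)))
  have hτ : ∀ i t, τ i t ∈ Icc (0 : ℝ) (dist (y.1 i) (z.1 i)) := fun i t =>
    ⟨le_max_left _ _, max_le dist_nonneg (min_le_right _ _)⟩
  have hcτ : ∀ i t, (c i : ℝ) * τ i t = max 0 (min t (c i * dist (y.1 i) (z.1 i))) := fun i t => by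
    simp only [τ]
    rw [mul_max_of_nonneg _ _ (c i).coe_nonneg, mul_min_of_nonneg _ _ (c i).coe_nonneg, mul_zero,
      mul_div_cancel₀ _ (hcr i).ne']
  have hbdd : ∀ t, ∃ C : ℝ, ∀ i, (c i : ℝ) * dist (f i (τ i t)) (x i) ≤ C := by
    intro t
    obtain ⟨C, hC⟩ := y.bdd
    refine ⟨max 0 t + C, fun i => ?_⟩
    have h1 : dist (f i (τ i t)) (y.1 i) = τ i t := by
      have := hf i _ (hτ i t) 0 ⟨le_rfl, dist_nonneg⟩
      rwa [hf0, sub_zero, abs_of_nonneg (hτ i t).1] at this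
    calc (c i : ℝ) * dist (f i (τ i t)) (x i)
        ≤ c i * (dist (f i (τ i t)) (y.1 i) + dist (y.1 i) (x i)) := by
          gcongr; exact dist_triangle _ _ _
      _ = c i * τ i t + c i * dist (y.1 i) (x i) := by rw [h1, mul_add]
      _ ≤ max 0 t + C := by
          refine add_le_add ?_ (hC i)
          rw [hcτ]
          exact max_le_max le_rfl (min_le_left _ _)
  let F : ℝ → BddSeq c x := fun t => ⟨fun i => f i (τ i t), hbdd t⟩
  have hD := BddSeq.tendsto_dist y z
  have hτlim : ∀ t ∈ Icc 0 (dist y z),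
      Tendsto (fun i => (c i : ℝ) * τ i t) (hyperfilter ℕ) (nhds t) := by
    intro t ht
    simp only [hcτ]
    have := (tendsto_const_nhds (x := (0 : ℝ)) (f := (hyperfilter ℕ : Filter ℕ))).max
      ((tendsto_const_nhds (x := t)).min hD)
    rwa [min_eq_left ht.2, max_eq_right ht.1] at this
  have hFd : ∀ s ∈ Icc 0 (dist y z), ∀ t ∈ Icc 0 (dist y z), dist (F s) (F t) = |s - t| := by
    intro s hs t ht
    refine BddSeq.dist_eq_of_tendsto ?_
    refine ((hτlim s hs).sub (hτlim t ht)).abs.congr fun i => ?_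
    rw [← mul_sub, abs_mul, abs_of_pos (hcr i)]
    exact congrArg _ (hf i _ (hτ i s) _ (hτ i t)).symm
  refine ⟨fun t => SeparationQuotient.mk (F t), ?_, ?_, ?_⟩
  · have : F 0 = y := BddSeq.ext <| funext fun i => by
      change f i (τ i 0) = y.1 i
      simp [τ, hf0, dist_nonneg]
    simp only [this]
  · rw [SeparationQuotient.dist_mk, ← dist_eq_zero, SeparationQuotient.dist_mk]
    refine BddSeq.dist_eq_of_tendsto ?_
    have := (hD.sub (hτlim _ ⟨dist_nonneg, le_rfl⟩)).abs
    rw [sub_self, abs_zero] at this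
    refine this.congr fun i => ?_
    have h2 := hf i _ (hτ i (dist y z)) _ ⟨dist_nonneg, le_rfl⟩
    rw [hf1, abs_sub_comm] at h2
    rw [← mul_sub, abs_mul, abs_of_pos (hcr i), ← h2]
  · intro s hs t ht
    rw [SeparationQuotient.dist_mk] at hs ht ⊢
    exact hFd s hs t ht

/-! ### Limit actions -/

/-- A family of isometric actions that moves the base points by a bounded rescaled amount acts
coordinatewise on the bounded sequences. -/
@[reducible] def BddSeq.mulAction {F : Type} [Group F] (a : ∀ i, F →* (X i ≃ᵢ X i))
    (ha : ∀ g, ∃ C : ℝ, ∀ i, (c i : ℝ) * dist (a i g (x i)) (x i) ≤ C) :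
    MulAction F (BddSeq c x) where
  smul g y := ⟨fun i => a i g (y.1 i), by
    obtain ⟨C, hC⟩ := ha g
    obtain ⟨C', hC'⟩ := y.bdd
    refine ⟨C' + C, fun i => ?_⟩
    calc (c i : ℝ) * dist (a i g (y.1 i)) (x i)
        ≤ c i * (dist (a i g (y.1 i)) (a i g (x i)) + dist (a i g (x i)) (x i)) := by
          gcongr; exact dist_triangle _ _ _
      _ = c i * dist (y.1 i) (x i) + c i * dist (a i g (x i)) (x i) := by
          rw [(a i g).dist_eq, mul_add]
      _ ≤ C' + C := add_le_add (hC' i) (hC i)⟩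
  one_smul y := BddSeq.ext <| funext fun i => by
    change a i 1 (y.1 i) = y.1 i
    rw [map_one]; rfl
  mul_smul g h y := BddSeq.ext <| funext fun i => by
    change a i (g * h) (y.1 i) = a i g (a i h (y.1 i))
    rw [map_mul]; rfl

/-- The coordinatewise action on bounded sequences descends to an isometric action on the
ultralimit. -/
theorem UltraLimit.exists_action {F : Type} [Group F] (a : ∀ i, F →* (X i ≃ᵢ X i))
    (ha : ∀ g, ∃ C : ℝ, ∀ i, (c i : ℝ) * dist (a i g (x i)) (x i) ≤ C) :
    ∃ σ : F →* (UltraLimit c x ≃ᵢ UltraLimit c x), ∀ g (y : BddSeq c x),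
      Tendsto (fun i => (c i : ℝ) * dist (a i g (y.1 i)) (y.1 i)) (hyperfilter ℕ)
        (nhds (dist (σ g (SeparationQuotient.mk y)) (SeparationQuotient.mk y))) := by
  let _ := BddSeq.mulAction a ha
  have : IsIsometricSMul F (BddSeq c x) := ⟨fun g => Isometry.of_dist_eq fun y z => by
    refine BddSeq.dist_eq_of_tendsto ((BddSeq.tendsto_dist y z).congr fun i => ?_)
    exact congrArg _ ((a i g).dist_eq _ _).symm⟩
  have : IsIsometricSMul F (UltraLimit c x) := ⟨fun g => Isometry.of_dist_eq fun y z => by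
    obtain ⟨y, rfl⟩ := SeparationQuotient.surjective_mk y
    obtain ⟨z, rfl⟩ := SeparationQuotient.surjective_mk z
    rw [← SeparationQuotient.mk_smul, ← SeparationQuotient.mk_smul,
      SeparationQuotient.dist_mk, SeparationQuotient.dist_mk, dist_smul]⟩
  refine ⟨{ toFun := fun g => IsometryEquiv.constSMul g
            map_one' := IsometryEquiv.ext fun y => one_smul F y
            map_mul' := fun g h => IsometryEquiv.ext fun y => mul_smul g h y }, fun g y => ?_⟩
  change Tendsto _ _ (nhds (dist (g • SeparationQuotient.mk y) (SeparationQuotient.mk y)))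
  rw [← SeparationQuotient.mk_smul, SeparationQuotient.dist_mk]
  exact BddSeq.tendsto_dist (g • y) y

/-- It suffices to bound the displacement of the base points by the free generators. -/
theorem bounded_displacement {ι : Type} (a : ∀ i, FreeGroup ι →* (X i ≃ᵢ X i)) {C : ℝ}
    (h : ∀ s i, (c i : ℝ) * dist (a i (FreeGroup.of s) (x i)) (x i) ≤ C) (w : FreeGroup ι) :
    ∃ C : ℝ, ∀ i, (c i : ℝ) * dist (a i w (x i)) (x i) ≤ C := by
  induction w using FreeGroup.induction_on with
  | C1 => exact ⟨0, fun i => by simp⟩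
  | of s => exact ⟨C, h s⟩
  | inv_of s _ =>
    refine ⟨C, fun i => ?_⟩
    have := (a i (FreeGroup.of s)).dist_eq (a i (FreeGroup.of s)⁻¹ (x i)) (x i)
    rw [map_inv, IsometryEquiv.apply_inv_self, dist_comm] at this
    rw [map_inv, ← this]
    exact h s i
  | mul v w hv hw =>
    obtain ⟨C₁, h₁⟩ := hv
    obtain ⟨C₂, h₂⟩ := hw
    refine ⟨C₂ + C₁, fun i => ?_⟩
    calc (c i : ℝ) * dist (a i (v * w) (x i)) (x i)
        ≤ c i * (dist (a i v (a i w (x i))) (a i v (x i)) + dist (a i v (x i)) (x i)) := by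
          rw [map_mul, IsometryEquiv.mul_apply]
          gcongr; exact dist_triangle _ _ _
      _ = c i * dist (a i w (x i)) (x i) + c i * dist (a i v (x i)) (x i) := by
          rw [(a i v).dist_eq, mul_add]
      _ ≤ C₂ + C₁ := add_le_add (h₂ i) (h₁ i)

end Ultralimit

theorem LHSeq.eventually_pk_eq_one {ι : Type} [Fintype ι] [DecidableEq ι] {G : Type} [Group G]
    {m : FreeGroup ι →* G} (D : LHSeq ι G m) {w : FreeGroup ι} (hw : m w = 1) :
    ∀ᶠ n in atTop, D.pk n w = 1 := by
  obtain ⟨N, hN⟩ := D.limit w hw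
  have hmono : Monotone fun n => (D.pk n).ker := monotone_nat_of_le_succ D.ker_mono
  exact eventually_atTop.2 ⟨N, fun n hn => hmono hn hN⟩

/-! ### The limit of the actions of the approximating groups -/

/-- Proposition 3.10, Bestvina–Paulin: given actions of `G_{k_i}` on
1-hyperbolic geodesic spaces with minimal displacement tending to infinity, the lacunary
hyperbolic group `G` acts on an ℝ-tree without a global fixed point. -/
theorem bestvina_paulin {ι : Type} [Fintype ι] [DecidableEq ι] [Nonempty ι]
    {G : Type} [Group G] {m : FreeGroup ι →* G} (D : LHSeq ι G m)
    (k : ℕ → ℕ) (hk : Filter.Tendsto k Filter.atTop Filter.atTop)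
    (X : ℕ → Type) [∀ i, MetricSpace (X i)] [∀ i, Nonempty (X i)]
    (hgeo : ∀ i, GeodesicSpace (X i)) (hhyp : ∀ i, GromovHyperbolicSpace (X i) 1)
    (ρ : ∀ i, D.Gk (k i) →* (X i ≃ᵢ X i))
    (hdisp : Filter.Tendsto (fun i => minDisp (D.pk (k i)) (ρ i))
      Filter.atTop Filter.atTop) :
    ∃ (T : Type) (_ : MetricSpace T), IsRTree T ∧
      ∃ σ : G →* (T ≃ᵢ T), ¬ ∃ t : T, ∀ g : G, σ g t = t := by
  -- base points whose displacement is within `1` of the minimal one, and scales `1 / max 1 λ`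
  have hx : ∀ i, ∃ x : X i, ⨆ s : ι, dist (ρ i (D.pk (k i) (FreeGroup.of s)) x) x
      < minDisp (D.pk (k i)) (ρ i) + 1 := fun i =>
    exists_lt_of_ciInf_lt (lt_add_one (minDisp (D.pk (k i)) (ρ i)))
  choose x hx using hx
  let r : ℕ → ℝ := fun i => max 1 (minDisp (D.pk (k i)) (ρ i))
  have hr : ∀ i, 0 < r i := fun i => lt_max_of_lt_left one_pos
  let c : ℕ → NNReal := fun i => ⟨(r i)⁻¹, (inv_pos.2 (hr i)).le⟩
  have hc : ∀ i, 0 < c i := fun i => inv_pos.2 (hr i)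
  have hω : (hyperfilter ℕ : Filter ℕ) ≤ atTop := Nat.cofinite_eq_atTop ▸ hyperfilter_le_cofinite
  have hc0 : Tendsto (fun i => (c i : ℝ)) (hyperfilter ℕ) (nhds 0) :=
    ((tendsto_atTop_mono (fun i => le_max_right _ _) hdisp : Tendsto r atTop atTop).inv_tendsto_atTop
      ).mono_left hω
  let a : ∀ i, FreeGroup ι →* (X i ≃ᵢ X i) := fun i => (ρ i).comp (D.pk (k i))
  have hsup : ∀ i (y : X i) s, dist (a i (FreeGroup.of s) y) y
      ≤ ⨆ s : ι, dist (ρ i (D.pk (k i) (FreeGroup.of s)) y) y := fun i y s =>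
    le_ciSup (f := fun s : ι => dist (ρ i (D.pk (k i) (FreeGroup.of s)) y) y)
      (Set.finite_range _).bddAbove s
  have hgen : ∀ s i, (c i : ℝ) * dist (a i (FreeGroup.of s) (x i)) (x i) ≤ 2 := by
    intro s i
    change (r i)⁻¹ * _ ≤ 2
    rw [inv_mul_le_iff₀ (hr i)]
    linarith [hsup i (x i) s, hx i, le_max_left 1 (minDisp (D.pk (k i)) (ρ i)),
      le_max_right 1 (minDisp (D.pk (k i)) (ρ i))]
  obtain ⟨σ, hσ⟩ := UltraLimit.exists_action a (bounded_displacement a hgen)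
  -- a relation of `G` holds in almost all `G_{k_i}`, so it acts trivially on the ultralimit
  have hker : m.ker ≤ σ.ker := by
    intro w hw
    refine IsometryEquiv.ext fun y => ?_
    obtain ⟨y, rfl⟩ := SeparationQuotient.surjective_mk y
    refine dist_eq_zero.1 (tendsto_nhds_unique (hσ w y) (tendsto_const_nhds.congr' ?_))
    filter_upwards [hω (hk.eventually (D.eventually_pk_eq_one hw))] with i hi
    simp [a, hi]
  refine ⟨UltraLimit c x, inferInstance,
    ⟨UltraLimit.geodesic hc hgeo, UltraLimit.hyperbolic hc0 hhyp⟩,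
    m.liftOfSurjective D.m_surj ⟨σ, hker⟩, ?_⟩
  rintro ⟨t, ht⟩
  have hfix : ∀ w, σ w t = t := fun w => by
    have := ht (m w)
    rwa [MonoidHom.liftOfSurjective, MonoidHom.liftOfRightInverse_comp_apply] at this
  obtain ⟨y, rfl⟩ := SeparationQuotient.surjective_mk t
  have hsmall : ∀ᶠ i in (hyperfilter ℕ : Filter ℕ), ∀ s,
      (c i : ℝ) * dist (a i (FreeGroup.of s) (y.1 i)) (y.1 i) < 1 / 2 :=
    eventually_all.2 fun s => (hσ (FreeGroup.of s) y).eventually_lt_const (by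
      rw [hfix, dist_self]; norm_num)
  obtain ⟨i, hi, hi1⟩ := (hsmall.and (hω (hdisp.eventually_ge_atTop 1))).exists
  have hri : r i = minDisp (D.pk (k i)) (ρ i) := max_eq_right hi1
  have h1 : minDisp (D.pk (k i)) (ρ i)
      ≤ ⨆ s : ι, dist (ρ i (D.pk (k i) (FreeGroup.of s)) (y.1 i)) (y.1 i) :=
    ciInf_le ⟨0, by rintro _ ⟨z, rfl⟩; exact Real.iSup_nonneg fun _ => dist_nonneg⟩ (y.1 i)
  have h2 : ⨆ s : ι, dist (ρ i (D.pk (k i) (FreeGroup.of s)) (y.1 i)) (y.1 i) ≤ r i * (1 / 2) :=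
    ciSup_le fun s => ((inv_mul_lt_iff₀ (hr i)).1 (hi s)).le
  linarith

end LacHyp
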